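/- arXiv:2310.15121 — 2 statements merged into one kernel-verified Lean document; each statement's English description precedes it below -/
import Mathlib

section
/- Existence of an irreducible embedding of SL(2,ℚ) into Sp(2k,ℚ): for every k ≥ 1, there exists an injective group homomorphism φ from SL(2,ℚ) into the rational symplectic group Sp(2k,ℚ) whose image acts irreducibly on ℚ^(2k), i.e., the only ℚ-subspaces W of the underlying 2k-dimensional rational vector space invariant under multiplication by every matrix in the image of φ are the zero subspace and the whole space. -/
/-!
The `n`-th symmetric power of the plane, for odd `n = 2k - 1`, is realized on `K ^ (n + 1)` by its
action on the Veronese vectors `v p = (p₀ ^ i * p₁ ^ (n - i))ᵢ`, which span since `K` is infinite.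
The bilinear form with value `(p₀ q₁ - p₁ q₀) ^ n` on `v p, v q` is scaled by `det ^ n`, hence fixed
by `SL₂`; for `n` odd it is alternating, with a Darboux basis of rescaled coordinate vectors. The
kernel of the action, contained in `{1, -1}`, is trivial because `-1` acts by `(-1) ^ n = -1`.

The torus element `diag(2, 2⁻¹)` has distinct eigenvalues, so a nonzero invariant subspace contains
a coordinate vector. The two elementary unipotent matrices act with nonzero binomial coefficients
above and below the diagonal, so they carry this vector to ones with any prescribed coordinate
nonzero, and projecting again shows that the subspace contains every coordinate vector.
-/

open Matrix Polynomial

section Veronese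

variable {R : Type*} [CommRing R]

/-- The Veronese map `p ↦ (p₀ ^ i * p₁ ^ (n - i))ᵢ`; its values are the vectors on which symmetric
powers are computed. -/
def veronese (n : ℕ) (p : Fin 2 → R) : Fin (n + 1) → R :=
  fun i => p 0 ^ (i : ℕ) * p 1 ^ (n - i)

/-- The matrix of the `n`-th symmetric power of `A = !![a, b; c, d]`: row `i` holds the coefficients
of the dehomogenized form `(a x + b) ^ i * (c x + d) ^ (n - i)`. -/
noncomputable def symPowMatrix (n : ℕ) (A : Matrix (Fin 2) (Fin 2) R) :
    Matrix (Fin (n + 1)) (Fin (n + 1)) R :=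
  .of fun i j =>
    ((C (A 0 0) * X + C (A 0 1)) ^ (i : ℕ) * (C (A 1 0) * X + C (A 1 1)) ^ (n - i)).coeff j

theorem eval_homogenize_eq_sum (f : R[X]) (n : ℕ) (p : Fin 2 → R) :
    (f.homogenize n).eval p = ∑ j : Fin (n + 1), f.coeff j * veronese n p j := by
  simp [homogenize, Finset.Nat.sum_antidiagonal_eq_sum_range_succ_mk, Finset.sum_range, veronese,
    MvPolynomial.eval_monomial, Finsupp.update_eq_add_single, Finsupp.prod_add_index', pow_add]

theorem homogenize_linear_pow_mul_linear_pow (A : Matrix (Fin 2) (Fin 2) R) (i j : ℕ) :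
    ((C (A 0 0) * X + C (A 0 1)) ^ i * (C (A 1 0) * X + C (A 1 1)) ^ j).homogenize (i + j) =
      (.C (A 0 0) * .X 0 + .C (A 0 1) * .X 1) ^ i *
        (.C (A 1 0) * .X 0 + .C (A 1 1) * .X 1) ^ j := by
  have linear (a b : R) :
      (.C a * .X 0 + .C b * .X 1 : MvPolynomial (Fin 2) R).IsHomogeneous 1 :=
    ((MvPolynomial.isHomogeneous_X R 0).C_mul a).add ((MvPolynomial.isHomogeneous_X R 1).C_mul b)
  apply homogenize_eq_of_isHomogeneous
  · simpa using ((linear (A 0 0) (A 0 1)).pow i).mul ((linear (A 1 0) (A 1 1)).pow j)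
  · simp

theorem symPowMatrix_mulVec_veronese (n : ℕ) (A : Matrix (Fin 2) (Fin 2) R) (p : Fin 2 → R) :
    symPowMatrix n A *ᵥ veronese n p = veronese n (A *ᵥ p) := by
  ext i
  have h := homogenize_linear_pow_mul_linear_pow A i (n - i)
  rw [Nat.add_sub_of_le i.is_le] at h
  simp only [mulVec, dotProduct, symPowMatrix, of_apply, ← eval_homogenize_eq_sum, h]
  simp [veronese]

theorem symPowMatrix_diagonal (n : ℕ) (d : Fin 2 → R) :
    symPowMatrix n (diagonal d) = diagonal (veronese n d) := by
  ext i j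
  have row : (C (d 0) * X) ^ (i : ℕ) * C (d 1) ^ (n - i) = C (veronese n d i) * X ^ (i : ℕ) := by
    simp only [veronese, C_mul, C_pow]
    ring
  simp [symPowMatrix, row, diagonal_apply, Fin.ext_iff, eq_comm]

theorem symPowMatrix_upper_apply (n : ℕ) (i j : Fin (n + 1)) :
    symPowMatrix n !![(1 : R), 1; 0, 1] i j = (i : ℕ).choose j := by
  simp [symPowMatrix, coeff_X_add_one_pow]

theorem symPowMatrix_lower_apply_of_le {n : ℕ} {i j : Fin (n + 1)} (h : i ≤ j) :
    symPowMatrix n !![(1 : R), 0; 1, 1] i j = (n - i).choose (j - i) := by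
  simp [symPowMatrix, coeff_X_pow_mul', coeff_X_add_one_pow, h.not_gt]

end Veronese

section SymmetricPower

variable {K : Type*} [Field K]

theorem span_range_veronese [Infinite K] (n : ℕ) :
    Submodule.span K (Set.range (veronese n : (Fin 2 → K) → Fin (n + 1) → K)) = ⊤ := by
  let t : Fin (n + 1) ↪ K := Fin.valEmbedding.trans (Infinite.natEmbedding K)
  have hli : LinearIndependent K (vandermonde t) :=
    linearIndependent_rows_of_det_ne_zero (det_vandermonde_ne_zero_iff.mpr t.injective)
  have hsub : Set.range (vandermonde t) ⊆ Set.range (veronese n) := by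
    rintro _ ⟨i, rfl⟩
    exact ⟨![t i, 1], by ext j; simp [veronese, vandermonde_apply]⟩
  rw [eq_top_iff, ← hli.span_eq_top_of_card_eq_finrank (by simp)]
  exact Submodule.span_mono hsub

theorem linearMap_ext_veronese [Infinite K] {n : ℕ} {M : Type*} [AddCommGroup M] [Module K M]
    {f g : (Fin (n + 1) → K) →ₗ[K] M} (h : ∀ p, f (veronese n p) = g (veronese n p)) : f = g :=
  LinearMap.ext_on_range (span_range_veronese n) h

/-- The `n`-th symmetric power of the standard representation of `2 × 2` matrices. -/
noncomputable def symPow (K : Type*) [Field K] [Infinite K] (n : ℕ) :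
    Representation K (Matrix (Fin 2) (Fin 2) K) (Fin (n + 1) → K) where
  toFun A := (symPowMatrix n A).mulVecLin
  map_one' := linearMap_ext_veronese fun p => by simp [symPowMatrix_mulVec_veronese]
  map_mul' A B := linearMap_ext_veronese fun p => by
    simp only [Module.End.mul_apply, mulVecLin_apply, symPowMatrix_mulVec_veronese, mulVec_mulVec]

theorem symPow_single_one_apply [Infinite K] (n : ℕ) (A : Matrix (Fin 2) (Fin 2) K)
    (i j : Fin (n + 1)) : symPow K n A (Pi.single j 1) i = symPowMatrix n A i j := by
  simp [symPow]

/-- The `n`-th symmetric power of the standard representation of `SL₂`. -/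
noncomputable def symPowSL (K : Type*) [Field K] [Infinite K] (n : ℕ) :
    Representation K (SpecialLinearGroup (Fin 2) K) (Fin (n + 1) → K) :=
  (symPow K n).comp SpecialLinearGroup.coeMonoidHom

theorem symPowSL_apply [Infinite K] (n : ℕ) (A : SpecialLinearGroup (Fin 2) K) :
    symPowSL K n A = symPow K n A.1 := rfl

theorem single_one_mem_of_forall_mul_mem {ι : Type*} [Finite ι] [DecidableEq ι] {d : ι → K}
    (hd : Function.Injective d) {W : Submodule K (ι → K)} (hW : ∀ w ∈ W, d * w ∈ W) {w : ι → K}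
    (hw : w ∈ W) {i : ι} (hi : w i ≠ 0) : Pi.single i 1 ∈ W := by
  have := Fintype.ofFinite ι
  have proj : aeval d (Lagrange.basis Finset.univ d i) = Pi.single i 1 := by
    ext j
    rw [aeval_pi_apply₂, coe_aeval_eq_eval]
    rcases eq_or_ne i j with rfl | hij
    · simp [Lagrange.eval_basis_self hd.injOn]
    · simp [Lagrange.eval_basis_of_ne hij, hij.symm]
  have h : Pi.single i 1 * w ∈ W :=
    proj ▸ aeval_apply_smul_mem_of_le_comap' hw (Lagrange.basis Finset.univ d i) d hW
  rw [← Pi.single_mul_left] at h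
  simpa [← Pi.single_smul, hi] using W.smul_mem (w i)⁻¹ h

theorem veronese_two_inv_two_injective [CharZero K] (n : ℕ) :
    Function.Injective (veronese n ![(2 : K), 2⁻¹]) := by
  have scaled (i : Fin (n + 1)) :
      2 ^ n * veronese n ![(2 : K), 2⁻¹] i = ((4 ^ (i : ℕ) : ℕ) : K) := by
    have h4 : (4 : K) = 2 * 2 := by norm_num
    simp only [veronese, cons_val_zero, cons_val_one, inv_pow]
    rw [← pow_sub_mul_pow 2 i.is_le, Nat.cast_pow, Nat.cast_ofNat, h4, mul_pow]
    field_simp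
  intro i j hij
  have h := congrArg (2 ^ n * ·) hij
  simp only [scaled, Nat.cast_inj] at h
  exact Fin.ext (Nat.pow_right_injective (by norm_num) h)

theorem single_one_mem_subrepresentation_symPowSL [CharZero K] {n : ℕ}
    (W : Subrepresentation (symPowSL K n)) {w : Fin (n + 1) → K} (hw : w ∈ W) {i : Fin (n + 1)}
    (hi : w i ≠ 0) : Pi.single i 1 ∈ W := by
  let torus : SpecialLinearGroup (Fin 2) K :=
    ⟨diagonal ![2, 2⁻¹], by simp [det_diagonal, Fin.prod_univ_two]⟩
  have torus_apply (u : Fin (n + 1) → K) :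
      symPowSL K n torus u = veronese n ![2, 2⁻¹] * u := by
    change symPowMatrix n (diagonal ![2, 2⁻¹]) *ᵥ u = _
    ext j
    rw [symPowMatrix_diagonal, mulVec_diagonal, Pi.mul_apply]
  exact single_one_mem_of_forall_mul_mem (W := W.toSubmodule) (veronese_two_inv_two_injective n)
    (fun u hu => torus_apply u ▸ W.apply_mem_toSubmodule torus hu) hw hi

theorem exists_symPowSL_single_one_apply_ne_zero [CharZero K] {n : ℕ} (i j : Fin (n + 1)) :
    ∃ A, symPowSL K n A (Pi.single i 1) j ≠ 0 := by
  rcases le_total i j with hij | hji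
  · refine ⟨⟨!![1, 1; 0, 1], by simp⟩, ?_⟩
    change symPow K n !![1, 1; 0, 1] _ _ ≠ 0
    rw [symPow_single_one_apply, symPowMatrix_upper_apply, Nat.cast_ne_zero]
    exact (Nat.choose_pos hij).ne'
  · refine ⟨⟨!![1, 0; 1, 1], by simp⟩, ?_⟩
    change symPow K n !![1, 0; 1, 1] _ _ ≠ 0
    rw [symPow_single_one_apply, symPowMatrix_lower_apply_of_le hji, Nat.cast_ne_zero]
    exact (Nat.choose_pos (Nat.sub_le_sub_right i.is_le j)).ne'

instance symPowSL_isIrreducible [CharZero K] (n : ℕ) : (symPowSL K n).IsIrreducible where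
  exists_pair_ne := ⟨⊥, ⊤, fun h => bot_ne_top (α := Submodule K (Fin (n + 1) → K)) <|
    congrArg Subrepresentation.toSubmodule h⟩
  eq_bot_or_eq_top W := by
    refine or_iff_not_imp_left.mpr fun hW => Subrepresentation.toSubmodule_injective ?_
    have hW' : W.toSubmodule ≠ ⊥ := fun h => hW (Subrepresentation.toSubmodule_injective h)
    obtain ⟨w, hw, hw0⟩ := W.toSubmodule.ne_bot_iff.mp hW'
    obtain ⟨i, hi⟩ := Function.ne_iff.mp hw0
    have basis_mem (j : Fin (n + 1)) : Pi.single j 1 ∈ W := by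
      obtain ⟨A, hA⟩ := exists_symPowSL_single_one_apply_ne_zero (K := K) i j
      exact single_one_mem_subrepresentation_symPowSL W
        (W.apply_mem_toSubmodule A (single_one_mem_subrepresentation_symPowSL W hw hi)) hA
    change W.toSubmodule = ⊤
    rw [eq_top_iff, ← (Pi.basisFun K (Fin (n + 1))).span_eq, Submodule.span_le]
    rintro _ ⟨j, rfl⟩
    simpa only [Pi.basisFun_apply] using! basis_mem j

theorem symPowSL_injective [Infinite K] {n : ℕ} (hn : Odd n) :
    Function.Injective (symPowSL K n) := by
  refine (injective_iff_map_eq_one _).mpr fun A hA => ?_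
  have fix (p : Fin 2 → K) (i : Fin (n + 1)) :
      veronese n ((A : Matrix (Fin 2) (Fin 2) K) *ᵥ p) i = veronese n p i := by
    have h := congrArg (fun f => f (veronese n p) i) hA
    simpa [symPowSL_apply, symPow, symPowMatrix_mulVec_veronese] using h
  obtain ⟨m, rfl⟩ := hn
  have h10 : A 1 0 = 0 := by simpa [veronese] using fix ![1, 0] 0
  have h01 : A 0 1 = 0 := by simpa [veronese] using fix ![0, 1] (Fin.last _)
  have h00 : A 0 0 ^ (2 * m + 1) = 1 := by simpa [veronese] using fix ![1, 0] (Fin.last _)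
  have hmix : A 0 0 ^ (2 * m) * A 1 1 = 1 := by
    simpa [veronese, h10, h01] using fix ![1, 1] (Fin.last (2 * m)).castSucc
  have hdet : A 0 0 * A 1 1 = 1 := by
    have h := A.det_coe
    rwa [det_fin_two, h10, mul_zero, sub_zero] at h
  have h11 : A 1 1 = A 0 0 := by linear_combination A 0 0 * hmix - A 1 1 * h00
  have hsq : A 0 0 ^ 2 = 1 := by rw [sq]; rwa [h11] at hdet
  have h00' : A 0 0 = 1 := by rwa [pow_succ, pow_mul, hsq, one_pow, one_mul] at h00
  ext i j
  fin_cases i <;> fin_cases j <;> simp [h00', h01, h10, h11]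

end SymmetricPower

section BracketForm

variable {R : Type*} [CommRing R]

/-- The `SL₂`-invariant form on the `n`-th symmetric power (the `n`-th transvectant), encoded by its
Gram matrix; on Veronese vectors it is the `n`-th power of the bracket `p₀ q₁ - p₁ q₀`. -/
noncomputable def bracketForm (R : Type*) [CommRing R] (n : ℕ) :
    LinearMap.BilinForm R (Fin (n + 1) → R) :=
  toBilin' (.of fun i j => if j = i.rev then (-1) ^ (n - i : ℕ) * (n.choose i : R) else 0)

theorem bracketForm_single_one (n : ℕ) (i j : Fin (n + 1)) :
    bracketForm R n (Pi.single i 1) (Pi.single j 1) =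
      if j = i.rev then (-1) ^ (n - i : ℕ) * (n.choose i : R) else 0 := by
  simp [bracketForm, toBilin'_single]

theorem bracketForm_veronese (n : ℕ) (p q : Fin 2 → R) :
    bracketForm R n (veronese n p) (veronese n q) = (p 0 * q 1 - p 1 * q 0) ^ n := by
  rw [sub_eq_add_neg, add_pow, Finset.sum_range, bracketForm, toBilin'_apply]
  refine Finset.sum_congr rfl fun i _ => ?_
  simp only [veronese, of_apply, mul_ite, mul_zero, ite_mul, zero_mul, Finset.sum_ite_eq',
    Finset.mem_univ, if_true, Fin.val_rev, Nat.add_sub_add_right, Nat.sub_sub_self i.is_le, mul_pow,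
    neg_pow (p 1 * q 0)]
  ring

theorem bracketForm_comp_symPow {K : Type*} [Field K] [Infinite K] (n : ℕ)
    (A : Matrix (Fin 2) (Fin 2) K) :
    (bracketForm K n).comp (symPow K n A) (symPow K n A) = A.det ^ n • bracketForm K n := by
  refine linearMap_ext_veronese fun p => linearMap_ext_veronese fun q => ?_
  simp only [LinearMap.BilinForm.comp_apply, LinearMap.smul_apply, symPow, MonoidHom.coe_mk,
    OneHom.coe_mk, mulVecLin_apply, symPowMatrix_mulVec_veronese, bracketForm_veronese, smul_eq_mul,
    ← mul_pow, det_fin_two, mulVec_fin_two]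
  simp only [cons_val_zero, cons_val_one]
  congr 1
  ring

end BracketForm

section DarbouxBasis

open Module

variable (K : Type*) [Field K]

/-- The pairing of the coordinates `i` and `2m + 1 - i`: the left copy enumerates the lower half of
the indices upwards, the right copy the upper half downwards. -/
def foldEquiv (m : ℕ) : Fin (m + 1) ⊕ Fin (m + 1) ≃ Fin (2 * m + 1 + 1) :=
  ((Equiv.refl _).sumCongr Fin.revPerm).trans (finSumFinEquiv.trans (finCongr (by omega)))

theorem val_foldEquiv_inl {m : ℕ} (i : Fin (m + 1)) : (foldEquiv m (.inl i) : ℕ) = i := by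
  simp [foldEquiv]

theorem rev_foldEquiv_inl {m : ℕ} (i : Fin (m + 1)) :
    (foldEquiv m (.inl i)).rev = foldEquiv m (.inr i) := by
  simp only [foldEquiv, Fin.ext_iff, Fin.val_rev, Equiv.trans_apply, Equiv.sumCongr_apply,
    Sum.map_inl, Sum.map_inr, Equiv.refl_apply, Fin.revPerm_apply, finSumFinEquiv_apply_left,
    finSumFinEquiv_apply_right, finCongr_apply, Fin.val_cast, Fin.val_castAdd, Fin.val_natAdd]
  lia

/-- The value of `bracketForm K (2 * m + 1)` on the coordinate vectors of indices `2m + 1 - i` and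
`i`, used to normalize a Darboux basis. -/
def signedChoose (m : ℕ) (i : Fin (m + 1)) : K :=
  (-1) ^ (i : ℕ) * (2 * m + 1).choose i

variable {K} in
theorem signedChoose_ne_zero [CharZero K] {m : ℕ} (i : Fin (m + 1)) : signedChoose K m i ≠ 0 :=
  mul_ne_zero (pow_ne_zero _ (neg_ne_zero.mpr one_ne_zero))
    (Nat.cast_ne_zero.mpr (Nat.choose_pos (by omega)).ne')

theorem bracketForm_single_foldEquiv_inl (m : ℕ) (i : Fin (m + 1)) (j : Fin (2 * m + 1 + 1)) :
    bracketForm K (2 * m + 1) (Pi.single (foldEquiv m (.inl i)) 1) (Pi.single j 1) =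
      if j = foldEquiv m (.inr i) then -signedChoose K m i else 0 := by
  have sign : (-1 : K) ^ (2 * m + 1 - i) = -(-1) ^ (i : ℕ) := by
    rw [neg_one_pow_congr (n := i + 1) (by grind), pow_succ, mul_neg_one]
  rw [bracketForm_single_one, rev_foldEquiv_inl, val_foldEquiv_inl, sign, neg_mul, signedChoose]

theorem bracketForm_single_foldEquiv_inr (m : ℕ) (i : Fin (m + 1)) (j : Fin (2 * m + 1 + 1)) :
    bracketForm K (2 * m + 1) (Pi.single (foldEquiv m (.inr i)) 1) (Pi.single j 1) =
      if j = foldEquiv m (.inl i) then signedChoose K m i else 0 := by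
  have hi : (i : ℕ) ≤ 2 * m + 1 := by lia
  rw [bracketForm_single_one, ← rev_foldEquiv_inl, Fin.rev_rev, Fin.val_rev, val_foldEquiv_inl,
    Nat.add_sub_add_right, Nat.sub_sub_self hi, Nat.choose_symm hi, signedChoose]

/-- A symplectic basis for `bracketForm K (2 * m + 1)`: the coordinate vectors ordered by
`foldEquiv`, those of the upper half rescaled. -/
noncomputable def darbouxBasis [CharZero K] (m : ℕ) :
    Basis (Fin (m + 1) ⊕ Fin (m + 1)) K (Fin (2 * m + 1 + 1) → K) :=
  ((Pi.basisFun K _).reindex (foldEquiv m).symm).isUnitSMul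
    (w := Sum.elim 1 fun i => (signedChoose K m i)⁻¹) <| by
      rintro (_ | i)
      · exact isUnit_one
      · exact (inv_ne_zero (signedChoose_ne_zero i)).isUnit

theorem darbouxBasis_inl [CharZero K] (m : ℕ) (i : Fin (m + 1)) :
    darbouxBasis K m (.inl i) = Pi.single (foldEquiv m (.inl i)) 1 := by
  simp [darbouxBasis, Basis.isUnitSMul_apply]

theorem darbouxBasis_inr [CharZero K] (m : ℕ) (i : Fin (m + 1)) :
    darbouxBasis K m (.inr i) =
      (signedChoose K m i)⁻¹ • Pi.single (foldEquiv m (.inr i)) 1 := by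
  simp [darbouxBasis, Basis.isUnitSMul_apply]

theorem toMatrix_darbouxBasis_bracketForm [CharZero K] (m : ℕ) :
    LinearMap.BilinForm.toMatrix (darbouxBasis K m) (bracketForm K (2 * m + 1)) =
      J (Fin (m + 1)) K := by
  ext (i | i) (j | j)
  · simp [LinearMap.BilinForm.toMatrix_apply, J, darbouxBasis_inl,
      bracketForm_single_foldEquiv_inl]
  · rcases eq_or_ne i j with rfl | hij
    · simp [LinearMap.BilinForm.toMatrix_apply, J, darbouxBasis_inl, darbouxBasis_inr,
        bracketForm_single_foldEquiv_inl, signedChoose_ne_zero]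
    · simp [LinearMap.BilinForm.toMatrix_apply, J, darbouxBasis_inl, darbouxBasis_inr,
        bracketForm_single_foldEquiv_inl, hij, hij.symm]
  · rcases eq_or_ne i j with rfl | hij
    · simp [LinearMap.BilinForm.toMatrix_apply, J, darbouxBasis_inl, darbouxBasis_inr,
        bracketForm_single_foldEquiv_inr, signedChoose_ne_zero]
    · simp [LinearMap.BilinForm.toMatrix_apply, J, darbouxBasis_inl, darbouxBasis_inr,
        bracketForm_single_foldEquiv_inr, hij, hij.symm]
  · simp [LinearMap.BilinForm.toMatrix_apply, J, darbouxBasis_inr,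
      bracketForm_single_foldEquiv_inr]

end DarbouxBasis

section SymplecticRepresentation

variable {K G V ι : Type*} [CommRing K] [Monoid G] [AddCommGroup V] [Module K V] [Fintype ι]
  [DecidableEq ι]

/-- A representation preserving a bilinear form `B`, as a homomorphism into the symplectic group,
by means of a basis in which `B` has the standard matrix `J`. -/
noncomputable def symplecticHom (ρ : Representation K G V) (b : Module.Basis (ι ⊕ ι) K V)
    (B : LinearMap.BilinForm K V) (hB : LinearMap.BilinForm.toMatrix b B = J ι K)
    (hρ : ∀ g, B.comp (ρ g) (ρ g) = B) : G →* symplecticGroup ι K where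
  toFun g := ⟨LinearMap.toMatrix b b (ρ g), by
    rw [SymplecticGroup.mem_iff', ← hB, ← LinearMap.BilinForm.toMatrix_comp, hρ]⟩
  map_one' := Subtype.ext (by simp)
  map_mul' g h := Subtype.ext (by simp [LinearMap.toMatrix_mul])

theorem symplecticHom_injective {ρ : Representation K G V} {b : Module.Basis (ι ⊕ ι) K V}
    {B : LinearMap.BilinForm K V} (hB : LinearMap.BilinForm.toMatrix b B = J ι K)
    (hρ : ∀ g, B.comp (ρ g) (ρ g) = B) (hinj : Function.Injective ρ) :
    Function.Injective (symplecticHom ρ b B hB hρ) := fun _ _ h =>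
  hinj ((LinearMap.toMatrix b b).injective (congrArg Subtype.val h))

theorem eq_bot_or_eq_top_of_toMatrix_mulVec_mem {K G V ι : Type*} [Field K] [Monoid G]
    [AddCommGroup V] [Module K V] [Fintype ι] [DecidableEq ι]
    (ρ : Representation K G V) [ρ.IsIrreducible] (b : Module.Basis ι K V) {W : Submodule K (ι → K)}
    (hW : ∀ g, ∀ w ∈ W, LinearMap.toMatrix b b (ρ g) *ᵥ w ∈ W) : W = ⊥ ∨ W = ⊤ := by
  let U : Subrepresentation ρ :=
    { toSubmodule := W.comap b.equivFun.toLinearMap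
      apply_mem_toSubmodule := fun g v hv => by
        simpa [LinearMap.toMatrix_mulVec_repr] using! hW g _ hv }
  have hU : W = U.toSubmodule.map b.equivFun.toLinearMap :=
    (Submodule.map_comap_eq_of_surjective b.equivFun.surjective W).symm
  rcases eq_bot_or_eq_top U with h | h
  · left
    rw [hU, h]
    exact Submodule.map_bot _
  · right
    rw [hU, h]
    exact (Submodule.map_top _).trans b.equivFun.range

end SymplecticRepresentation

theorem exists_irreducible_embedding_SL2Q_symplectic_general (K : Type*) [Field K] [CharZero K]
    (k : ℕ) (hk : 1 ≤ k) :
    ∃ φ : Matrix.SpecialLinearGroup (Fin 2) K →* Matrix.symplecticGroup (Fin k) K,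
      Function.Injective φ ∧
      ∀ W : Submodule K (Fin k ⊕ Fin k → K),
        (∀ A : Matrix.SpecialLinearGroup (Fin 2) K, ∀ w ∈ W,
          ((φ A : Matrix (Fin k ⊕ Fin k) (Fin k ⊕ Fin k) K)).mulVec w ∈ W) →
        W = ⊥ ∨ W = ⊤ := by
  obtain ⟨m, rfl⟩ := Nat.exists_eq_add_of_le' hk
  have invariant (A : SpecialLinearGroup (Fin 2) K) :
      (bracketForm K (2 * m + 1)).comp (symPowSL K _ A) (symPowSL K _ A) = bracketForm K _ := by
    rw [symPowSL_apply, bracketForm_comp_symPow, A.det_coe, one_pow, one_smul]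
  exact ⟨symplecticHom (symPowSL K _) (darbouxBasis K m) (bracketForm K _)
      (toMatrix_darbouxBasis_bracketForm K m) invariant,
    symplecticHom_injective _ _ (symPowSL_injective ⟨m, rfl⟩),
    fun _ => eq_bot_or_eq_top_of_toMatrix_mulVec_mem (symPowSL K _) (darbouxBasis K m)⟩

/-- For every `k ≥ 1` there is an injective group homomorphism `SL(2,ℚ) → Sp(2k,ℚ)` whose
image acts irreducibly on `ℚ^(2k)`. -/
theorem exists_irreducible_embedding_SL2Q_symplectic (k : ℕ) (hk : 1 ≤ k) :
    ∃ φ : Matrix.SpecialLinearGroup (Fin 2) ℚ →* Matrix.symplecticGroup (Fin k) ℚ,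
      Function.Injective φ ∧
      ∀ W : Submodule ℚ (Fin k ⊕ Fin k → ℚ),
        (∀ A : Matrix.SpecialLinearGroup (Fin 2) ℚ, ∀ w ∈ W,
          ((φ A : Matrix (Fin k ⊕ Fin k) (Fin k ⊕ Fin k) ℚ)).mulVec w ∈ W) →
        W = ⊥ ∨ W = ⊤ :=
  exists_irreducible_embedding_SL2Q_symplectic_general ℚ k hk
end

section
/- Existence of discrete, faithful, rational representations of surface groups in the symplectic group: for every k ≥ 1 and every g ≥ 2, there exists an injective group homomorphism ρ from the genus-g surface group Σ_g to Sp(2k,ℝ) such that every matrix entry of every element of the image of ρ is rational (lies in the range of the coercion ℚ → ℝ) and the image of ρ is a discrete subgroup of Sp(2k,ℝ). -/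
/-- The surface relator `[a₁,b₁] ⋯ [a_g,b_g]` in the free group on `a₁,b₁,…,a_g,b_g`. -/
def surfaceRelator (g : ℕ) : FreeGroup (Fin g ⊕ Fin g) :=
  (List.ofFn fun i : Fin g =>
    FreeGroup.of (Sum.inl i) * FreeGroup.of (Sum.inr i) *
      (FreeGroup.of (Sum.inl i))⁻¹ * (FreeGroup.of (Sum.inr i))⁻¹).prod

/-- The genus-`g` surface group `Σ_g = ⟨a₁,b₁,…,a_g,b_g ∣ [a₁,b₁]⋯[a_g,b_g]⟩`. -/
abbrev SurfaceGroup (g : ℕ) : Type :=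
  PresentedGroup ({surfaceRelator g} : Set (FreeGroup (Fin g ⊕ Fin g)))

/-!
A closed surface of genus two is the double of a one-holed torus, whose group is free on `a`, `b`
with boundary `⁅a, b⁆`. Represent it in `SL(2, ℚ)` by a pair of matrices with commutator
`diag(-4, -1/4)`. Ping-pong shows that every element `w` outside `⟨⁅a, b⁆⟩` maps the closed fourth
quadrant into the open first one, up to sign, and the same for `w⁻¹ * ⁅a, b⁆ * w` bounds the
product of the diagonal entries of `w` away from zero. Transposed inversion inverts `⁅a, b⁆` and
carries this picture to the complementary quadrants, so that it represents the other half of the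
surface. In an alternating product of elements of the two halves the quadrants match up, which keeps
the product in a region that is bounded away from `1`.

The groups of higher genus are subgroups of the genus-two group, by cyclic coverings; that the
induced map of presented groups is injective is seen on the induced permutation representation.
Finally `SL(2)` embeds in the symplectic group by scalar blocks.
-/

open scoped Matrix MatrixGroups commutatorElement

section PingPong

variable {ι G : Type*} [Group G]

/-- The letters of words in the family `f`: `(i, true)` stands for `f i` and `(i, false)` for its
inverse, as in `FreeGroup`. -/
def letter (f : ι → G) (x : ι × Bool) : G := cond x.2 (f x.1) (f x.1)⁻¹

theorem map_letter {H : Type*} [Group H] (φ : G →* H) (f : ι → G) (x : ι × Bool) :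
    φ (letter f x) = letter (φ ∘ f) x := by
  rcases x with ⟨i, _ | _⟩ <;> simp [letter]

theorem mem_or_exists_mem_of_mem_closure_range {f : ι → G} {B : Set G} {P : ι × Bool → Set G}
    (one_mem : 1 ∈ B)
    (base : ∀ x, ∀ w ∈ B, letter f x * w ∈ B ∪ P x)
    (step : ∀ x y, (y.1 = x.1 → y.2 = x.2) → ∀ w ∈ P x, letter f y * w ∈ P y)
    {w : G} (hw : w ∈ Subgroup.closure (Set.range f)) : w ∈ B ∨ ∃ x, w ∈ P x := by
  have reduced : ∀ (x : ι × Bool) (L : List (ι × Bool)), FreeGroup.IsReduced (x :: L) →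
      FreeGroup.lift f (FreeGroup.mk (x :: L)) ∈ B ∪ P x := by
    intro x L
    induction L generalizing x with
    | nil => intro _; simpa [letter] using base x 1 one_mem
    | cons y L ih =>
      intro hL
      rw [FreeGroup.isReduced_cons_cons] at hL
      have cons : FreeGroup.lift f (FreeGroup.mk (x :: y :: L)) =
          letter f x * FreeGroup.lift f (FreeGroup.mk (y :: L)) := by
        simp only [FreeGroup.lift_mk, List.map_cons, List.prod_cons, letter]
      rw [cons]
      exact (ih y hL.2).elim (base x _) fun h => Or.inr (step y x hL.1 _ h)
  rw [← FreeGroup.range_lift_eq_closure] at hw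
  obtain ⟨v, rfl⟩ := hw
  classical
  rw [← FreeGroup.mk_toWord (x := v)]
  have hv := FreeGroup.isReduced_toWord (x := v)
  cases hL : v.toWord with
  | nil => exact Or.inl (by simpa using one_mem)
  | cons x L => exact (reduced x L (hL ▸ hv)).imp_right fun h => ⟨x, h⟩

open Monoid in
theorem prod_mem_range_base_or_mem {H : Type*} [Group H] {K : ι → Type*} [∀ i, Group (K i)]
    {φ : ∀ i, H →* K i} {P : ι → Set (PushoutI φ)}
    (base : ∀ i, ∀ x ∉ (φ i).range, PushoutI.of i x ∈ P i)
    (step : ∀ i j, i ≠ j → ∀ x ∉ (φ i).range, ∀ y ∈ P j, PushoutI.of i x * y ∈ P i)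
    {d : PushoutI.NormalWord.Transversal φ} (w : PushoutI.NormalWord d) :
    (w.fstIdx = none → w.prod ∈ (PushoutI.base φ).range) ∧
      ∀ i, w.fstIdx = some i → ∀ h, PushoutI.base φ h * w.prod ∈ P i := by
  classical
  induction w using PushoutI.NormalWord.consRecOn with
  | empty =>
    rw [PushoutI.NormalWord.prod_empty]
    exact ⟨fun _ => one_mem _, nofun⟩
  | cons i x w hmw _ hx _ ih =>
    have hfst : (PushoutI.NormalWord.cons x w hmw hx).fstIdx = some i := by
      simp [PushoutI.NormalWord.cons, CoprodI.Word.cons, CoprodI.Word.fstIdx]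
    rw [hfst, PushoutI.NormalWord.prod_cons]
    refine ⟨nofun, fun j hj h => ?_⟩
    obtain rfl := Option.some.inj hj
    have hx' : φ i h * x ∉ (φ i).range := by
      rwa [Subgroup.mul_mem_cancel_left _ (MonoidHom.mem_range.2 ⟨h, rfl⟩)]
    rw [← PushoutI.of_apply_eq_base φ i, ← mul_assoc, ← map_mul]
    cases hw : w.fstIdx with
    | none =>
      obtain ⟨h', hh'⟩ := ih.1 hw
      rw [← hh', ← PushoutI.of_apply_eq_base φ i, ← map_mul]
      apply base
      rwa [Subgroup.mul_mem_cancel_right _ (MonoidHom.mem_range.2 ⟨h', rfl⟩)]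
    | some j =>
      have hij : i ≠ j := fun hij => hmw (hij ▸ hw)
      exact step i j hij _ hx' _ (by simpa using ih.2 j hw 1)
  | base h w _ ih =>
    rw [PushoutI.NormalWord.base_smul_eq_smul, PushoutI.NormalWord.prod_base_smul]
    refine ⟨fun hw => mul_mem ⟨h, rfl⟩ (ih.1 hw), fun i hi h' => ?_⟩
    rw [← mul_assoc, ← map_mul]
    exact ih.2 i hi _

open Monoid in
theorem mem_or_exists_mem_of_mem_iSup {C : Subgroup G} {H : ι → Subgroup G} {P : ι → Set G}
    (le : ∀ i, C ≤ H i) (base : ∀ i, ∀ x ∈ H i, x ∉ C → x ∈ P i)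
    (step : ∀ i j, i ≠ j → ∀ x ∈ H i, x ∉ C → ∀ y ∈ P j, x * y ∈ P i)
    {g : G} (hg : g ∈ ⨆ i, H i) : g ∈ C ∨ ∃ i, g ∈ P i := by
  let φ : ∀ i, C →* H i := fun i => Subgroup.inclusion (le i)
  let ψ : PushoutI φ →* G :=
    PushoutI.lift (fun i => (H i).subtype) C.subtype fun i => by ext; rfl
  have ψ_of : ∀ i (x : H i), ψ (PushoutI.of i x) = x := fun i x => PushoutI.lift_of ..
  have mem_C : ∀ i, ∀ x ∉ (φ i).range, (x : G) ∉ C := fun i x hx hxC => hx ⟨⟨x, hxC⟩, rfl⟩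
  obtain ⟨p, rfl⟩ : g ∈ ψ.range :=
    (iSup_le fun i x hx => ⟨PushoutI.of i ⟨x, hx⟩, ψ_of ..⟩ : ⨆ i, H i ≤ ψ.range) hg
  classical
  obtain ⟨d⟩ := PushoutI.NormalWord.transversal_nonempty φ fun i =>
    Subgroup.inclusion_injective (le i)
  obtain ⟨w, rfl⟩ : ∃ w : PushoutI.NormalWord d, w.prod = p :=
    PushoutI.NormalWord.equiv.symm.surjective p
  have normal := prod_mem_range_base_or_mem (P := fun i => ψ ⁻¹' P i) (fun i x hx => ?_)
    (fun i j hij x hx y hy => ?_) w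
  · cases hw : w.fstIdx with
    | none =>
      obtain ⟨c, hc⟩ := normal.1 hw
      have ψ_base : ψ (PushoutI.base φ c) = c := PushoutI.lift_base ..
      rw [← hc, ψ_base]
      exact Or.inl c.2
    | some i => exact Or.inr ⟨i, by simpa using normal.2 i hw 1⟩
  · rw [Set.mem_preimage, ψ_of]
    exact base i x x.2 (mem_C i x hx)
  · rw [Set.mem_preimage, map_mul, ψ_of]
    exact step i j hij x x.2 (mem_C i x hx) _ hy

end PingPong

section SpecialLinear

variable {R : Type*} [CommRing R]

theorem specialLinearGroup_two_det (M : SL(2, R)) : M 0 0 * M 1 1 - M 0 1 * M 1 0 = 1 := by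
  rw [← Matrix.det_fin_two]
  exact M.det_coe

/-- The inclusion `u ↦ diag(u, u⁻¹)` of the diagonal torus. -/
def diagonalTorus (R : Type*) [CommRing R] : Rˣ →* SL(2, R) where
  toFun u := ⟨!![(u : R), 0; 0, (u⁻¹ : Rˣ)], by simp⟩
  map_one' := Subtype.ext (by simp [Matrix.one_fin_two])
  map_mul' u v := Subtype.ext (by
    change _ = !![(u : R), 0; 0, (u⁻¹ : Rˣ)] * !![(v : R), 0; 0, (v⁻¹ : Rˣ)]
    simp [mul_comm])

theorem coe_diagonalTorus (u : Rˣ) :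
    (diagonalTorus R u : Matrix (Fin 2) (Fin 2) R) = !![(u : R), 0; 0, (u⁻¹ : Rˣ)] :=
  rfl

/-- The contragredient representation of `SL(n, R)`, sending `M` to the transpose of `M⁻¹`. -/
def contragredient (n R : Type*) [Fintype n] [DecidableEq n] [CommRing R] :
    Matrix.SpecialLinearGroup n R →* Matrix.SpecialLinearGroup n R where
  toFun M := M⁻¹.transpose
  map_one' := Subtype.ext (by simp)
  map_mul' M N := Subtype.ext (by simp [Matrix.transpose_mul])

theorem coe_contragredient {n : Type*} [Fintype n] [DecidableEq n]
    (M : Matrix.SpecialLinearGroup n R) : (contragredient n R M : Matrix n n R) = M.1.adjugateᵀ :=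
  congrArg Matrix.transpose M.coe_inv

theorem contragredient_contragredient {n : Type*} [Fintype n] [DecidableEq n]
    (M : Matrix.SpecialLinearGroup n R) : contragredient n R (contragredient n R M) = M := by
  apply Subtype.ext
  rw [coe_contragredient, coe_contragredient, Matrix.adjugate_transpose, Matrix.transpose_transpose,
    ← Matrix.SpecialLinearGroup.coe_inv, ← Matrix.SpecialLinearGroup.coe_inv, inv_inv]

theorem coe_contragredient_two (M : SL(2, R)) :
    (contragredient (Fin 2) R M : Matrix (Fin 2) (Fin 2) R) = !![M 1 1, -M 1 0; -M 0 1, M 0 0] := by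
  rw [coe_contragredient, Matrix.adjugate_fin_two]
  ext i j
  fin_cases i <;> fin_cases j <;> rfl

theorem contragredient_diagonalTorus (u : Rˣ) :
    contragredient (Fin 2) R (diagonalTorus R u) = (diagonalTorus R u)⁻¹ := by
  ext i j
  rw [coe_contragredient_two, ← map_inv]
  fin_cases i <;> fin_cases j <;> simp [coe_diagonalTorus]

theorem conj_diagonalTorus_ne {K : Type*} [Field K] {u v : Kˣ} (hu : (u : K) ^ 2 ≠ 1)
    {M : SL(2, K)} (hM : M 0 0 * M 1 0 ≠ 0) :
    M⁻¹ * diagonalTorus K u * M ≠ diagonalTorus K v := by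
  intro h
  rw [mul_assoc, inv_mul_eq_iff_eq_mul] at h
  have entry : ∀ i, (diagonalTorus K u * M) i 0 = (M * diagonalTorus K v) i 0 := fun i => by rw [h]
  simp only [Matrix.SpecialLinearGroup.coe_mul, Matrix.mul_apply, coe_diagonalTorus,
    Fin.sum_univ_two, Fin.forall_fin_two, Matrix.of_apply, Matrix.cons_val', Matrix.cons_val_zero,
    Matrix.cons_val_one, Matrix.cons_val_fin_one, zero_mul, mul_zero, add_zero, zero_add] at entry
  have huv : (u : K) = v := mul_left_cancel₀ (left_ne_zero_of_mul hM) (by rw [mul_comm, entry.1])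
  have huv' : ((u⁻¹ : Kˣ) : K) = v :=
    mul_left_cancel₀ (right_ne_zero_of_mul hM) (by rw [mul_comm, entry.2])
  refine hu ?_
  rw [sq]
  nth_rewrite 2 [huv]
  rw [← huv', Units.mul_inv]

end SpecialLinear

section UpToSign

variable {n R : Type*} [Fintype n] [CommRing R] {s t u : Set (n → R)}

/-- `MapsToUpToSign M s t` says that `M` or `-M` maps the cone `s` into the cone `t`: it is the
substitute for an inclusion in the projective space, on which `M` and `-M` act alike. -/
def MapsToUpToSign (M : Matrix n n R) (s t : Set (n → R)) : Prop :=
  Set.MapsTo M.mulVec s t ∨ Set.MapsTo (-M).mulVec s t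

theorem MapsToUpToSign.mul {M N : Matrix n n R} (hM : MapsToUpToSign M t u)
    (hN : MapsToUpToSign N s t) : MapsToUpToSign (M * N) s u := by
  have comp : ∀ {M N : Matrix n n R}, Set.MapsTo M.mulVec t u → Set.MapsTo N.mulVec s t →
      Set.MapsTo (M * N).mulVec s u := fun hM hN v hv => by
    rw [← Matrix.mulVec_mulVec]
    exact hM (hN hv)
  rcases hM with hM | hM <;> rcases hN with hN | hN
  · exact Or.inl (comp hM hN)
  · exact Or.inr (by simpa using comp hM hN)
  · exact Or.inr (by simpa using comp hM hN)
  · exact Or.inl (by simpa using comp hM hN)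

theorem MapsToUpToSign.mono_right {M : Matrix n n R} (h : MapsToUpToSign M s t) (htu : t ⊆ u) :
    MapsToUpToSign M s u :=
  h.imp (fun h => h.mono_right htu) fun h => h.mono_right htu

theorem mapsToUpToSign_fin_two {a b c d : R} {s t : Set (Fin 2 → R)} :
    MapsToUpToSign !![a, b; c, d] s t ↔
      (∀ v ∈ s, ![a * v 0 + b * v 1, c * v 0 + d * v 1] ∈ t) ∨
        ∀ v ∈ s, ![-(a * v 0 + b * v 1), -(c * v 0 + d * v 1)] ∈ t := by
  have neg : ∀ v, -!![a, b; c, d] *ᵥ v =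
      ![-(a * v 0 + b * v 1), -(c * v 0 + d * v 1)] := fun v => by
    rw [Matrix.neg_mulVec, Matrix.mulVec_fin_two]
    simp
  simp only [MapsToUpToSign, Set.MapsTo, neg, Matrix.mulVec_fin_two]
  rfl

end UpToSign

section Quadrants

variable {K : Type*} [Field K] [LinearOrder K] [IsStrictOrderedRing K] {δ : K}

/-- The open first quadrant of `K²`. -/
def firstQuadrant (K : Type*) [Zero K] [LT K] : Set (Fin 2 → K) := {v | 0 < v 0 ∧ 0 < v 1}

/-- The closed fourth quadrant of `K²`, without the origin. -/
def fourthQuadrant (K : Type*) [Zero K] [LinearOrder K] : Set (Fin 2 → K) :=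
  {v | 0 ≤ v 0 ∧ v 1 ≤ 0 ∧ v 1 < v 0}

/-- `M` maps both coordinate axes into the open first and third quadrants, the product of
its off-diagonal entries being bounded away from zero by `δ`. -/
structure AxesIntoFirstQuadrant (δ : K) (M : SL(2, K)) : Prop where
  col_zero : 0 < M 0 0 * M 1 0
  col_one : 0 < M 0 1 * M 1 1
  le_offDiag : δ ≤ |M 0 1 * M 1 0|

/-- `M` maps the closed fourth quadrant into the open first quadrant up to sign, the product of
its diagonal entries being bounded away from zero by `δ`. -/
structure FourthIntoFirstQuadrant (δ : K) (M : SL(2, K)) : Prop where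
  col_zero : 0 < M 0 0 * M 1 0
  col_one : 0 < M 0 1 * M 1 1
  diag_le : M 0 0 * M 1 1 ≤ -δ

theorem mapsToUpToSign_diagonalTorus (u : Kˣ) :
    MapsToUpToSign (diagonalTorus K u : Matrix (Fin 2) (Fin 2) K)
      (fourthQuadrant K) (fourthQuadrant K) := by
  have pos : ∀ u : Kˣ, 0 < (u : K) →
      Set.MapsTo (diagonalTorus K u : Matrix (Fin 2) (Fin 2) K).mulVec
        (fourthQuadrant K) (fourthQuadrant K) := by
    rintro u hu v ⟨h0, h1, h01⟩
    have hu' : 0 < (u : K)⁻¹ := inv_pos.2 hu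
    have mulVec : (diagonalTorus K u : Matrix (Fin 2) (Fin 2) K) *ᵥ v =
        ![u * v 0, (u : K)⁻¹ * v 1] := by
      rw [Matrix.mulVec_fin_two, coe_diagonalTorus]
      simp
    rw [mulVec]
    refine ⟨mul_nonneg hu.le h0, mul_nonpos_of_nonneg_of_nonpos hu'.le h1, ?_⟩
    rcases h0.eq_or_lt with h0 | h0
    · rw [← h0, mul_zero]
      exact mul_neg_of_pos_of_neg hu' (h0 ▸ h01)
    · exact (mul_nonpos_of_nonneg_of_nonpos hu'.le h1).trans_lt (mul_pos hu h0)
  rcases u.ne_zero.lt_or_gt with hu | hu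
  · have neg : -(diagonalTorus K u : Matrix (Fin 2) (Fin 2) K) = diagonalTorus K (-u) := by
      simp [coe_diagonalTorus]
    exact Or.inr (neg ▸ pos (-u) (by simpa using hu))
  · exact Or.inl (pos u hu)

theorem signs_of_mapsToUpToSign {M : Matrix (Fin 2) (Fin 2) K}
    (h : MapsToUpToSign M (fourthQuadrant K) (firstQuadrant K)) :
    0 < M 0 0 * M 1 0 ∧ 0 < M 0 1 * M 1 1 ∧ M 0 0 * M 1 1 < 0 := by
  have pos : ∀ {M : Matrix (Fin 2) (Fin 2) K},
      Set.MapsTo M.mulVec (fourthQuadrant K) (firstQuadrant K) →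
        0 < M 0 0 ∧ 0 < M 1 0 ∧ M 0 1 < 0 ∧ M 1 1 < 0 := by
    intro M h
    have h0 : ![1, 0] ∈ fourthQuadrant K := by simp [fourthQuadrant]
    have h1 : ![0, -1] ∈ fourthQuadrant K := by simp [fourthQuadrant]
    simpa [firstQuadrant, Matrix.mulVec_fin_two, and_assoc] using And.intro (h h0) (h h1)
  rcases h with h | h
  · obtain ⟨h00, h10, h01, h11⟩ := pos h
    exact ⟨mul_pos h00 h10, mul_pos_of_neg_of_neg h01 h11, mul_neg_of_pos_of_neg h00 h11⟩
  · obtain ⟨h00, h10, h01, h11⟩ := pos h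
    simp only [Matrix.neg_apply, Left.neg_pos_iff, Left.neg_neg_iff] at h00 h10 h01 h11
    exact ⟨mul_pos_of_neg_of_neg h00 h10, mul_pos h01 h11, mul_neg_of_neg_of_pos h00 h11⟩

theorem diag_mul_lt_of_mapsToUpToSign_conj {u : Kˣ} (hu : 1 < (u : K) ^ 2) {M : SL(2, K)}
    (hM : M 0 0 * M 1 1 < 0)
    (h : MapsToUpToSign ((M⁻¹ * diagonalTorus K u * M : SL(2, K)) : Matrix (Fin 2) (Fin 2) K)
      (fourthQuadrant K) (firstQuadrant K)) :
    ((u : K) ^ 2 - 1) * (M 0 0 * M 1 1) < -1 := by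
  obtain ⟨-, -, hdiag⟩ := signs_of_mapsToUpToSign h
  have det : M 0 1 * M 1 0 = M 0 0 * M 1 1 - 1 := by
    linear_combination -specialLinearGroup_two_det M
  have entries : ∀ i, (M⁻¹ * diagonalTorus K u * M : SL(2, K)) i i =
      ![u * (M 0 0 * M 1 1) - (u : K)⁻¹ * (M 0 1 * M 1 0),
        (u : K)⁻¹ * (M 0 0 * M 1 1) - u * (M 0 1 * M 1 0)] i := by
    intro i
    rw [Matrix.SpecialLinearGroup.coe_mul, Matrix.SpecialLinearGroup.coe_mul,
      Matrix.SpecialLinearGroup.coe_inv, Matrix.adjugate_fin_two, coe_diagonalTorus]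
    fin_cases i <;> simp [Matrix.mul_apply] <;> ring
  have conj : (u : K) ^ 2 * ((M⁻¹ * diagonalTorus K u * M : SL(2, K)) 0 0 *
      (M⁻¹ * diagonalTorus K u * M : SL(2, K)) 1 1) =
        (((u : K) ^ 2 - 1) * (M 0 0 * M 1 1) + 1) *
          ((u : K) ^ 2 - ((u : K) ^ 2 - 1) * (M 0 0 * M 1 1)) := by
    rw [entries, entries, det]
    simp only [Matrix.cons_val_zero, Matrix.cons_val_one]
    field_simp
    ring
  have neg : ((u : K) ^ 2 - 1) * (M 0 0 * M 1 1) < 0 := mul_neg_of_pos_of_neg (sub_pos.2 hu) hM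
  have prod_neg := conj ▸ mul_neg_of_pos_of_neg (zero_lt_one.trans hu) hdiag
  linarith [neg_of_mul_neg_left prod_neg (by linarith)]

theorem fourthIntoFirstQuadrant_of_mapsToUpToSign {u : Kˣ} (hu : 1 < (u : K) ^ 2) {M : SL(2, K)}
    (hM : MapsToUpToSign (M : Matrix (Fin 2) (Fin 2) K) (fourthQuadrant K) (firstQuadrant K))
    (hconj : MapsToUpToSign ((M⁻¹ * diagonalTorus K u * M : SL(2, K)) : Matrix (Fin 2) (Fin 2) K)
      (fourthQuadrant K) (firstQuadrant K)) :
    FourthIntoFirstQuadrant ((u : K) ^ 2 - 1)⁻¹ M := by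
  obtain ⟨hcol₀, hcol₁, hdiag⟩ := signs_of_mapsToUpToSign hM
  refine ⟨hcol₀, hcol₁, ?_⟩
  rw [← neg_le_neg_iff, neg_neg, inv_le_iff_one_le_mul₀ (sub_pos.2 hu)]
  linarith [diag_mul_lt_of_mapsToUpToSign_conj hu hdiag hconj]

theorem FourthIntoFirstQuadrant.offDiag_le {X : SL(2, K)} (hX : FourthIntoFirstQuadrant δ X) :
    X 0 1 * X 1 0 ≤ -δ - 1 := by
  linarith [hX.diag_le, specialLinearGroup_two_det X]

theorem FourthIntoFirstQuadrant.axesIntoFirstQuadrant {X : SL(2, K)}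
    (hX : FourthIntoFirstQuadrant δ X) : AxesIntoFirstQuadrant δ X :=
  ⟨hX.col_zero, hX.col_one, le_abs'.2 (Or.inl (by linarith [hX.offDiag_le]))⟩

theorem FourthIntoFirstQuadrant.mulVec_mul_pos {X : SL(2, K)} (hX : FourthIntoFirstQuadrant δ X)
    (hδ : 0 ≤ δ) {p q : K} (hpq : p * q < 0) :
    0 < (X 0 0 * p + X 0 1 * q) * (X 1 0 * p + X 1 1 * q) := by
  have cross : 0 < (X 0 0 * X 1 1 + X 0 1 * X 1 0) * (p * q) :=
    mul_pos_of_neg_of_neg (by linarith [hX.diag_le, hX.offDiag_le]) hpq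
  linear_combination cross + mul_nonneg hX.col_zero.le (sq_nonneg p) +
    mul_nonneg hX.col_one.le (sq_nonneg q)

theorem FourthIntoFirstQuadrant.le_abs_mul {X M : SL(2, K)} (hX : FourthIntoFirstQuadrant δ X)
    (hδ : 0 ≤ δ) (hM0 : M 0 0 * M 1 0 < 0) (hM1 : M 0 1 * M 1 1 < 0) :
    δ ≤ |(X 0 0 * M 0 1 + X 0 1 * M 1 1) * (X 1 0 * M 0 0 + X 1 1 * M 1 0)| := by
  have hM := specialLinearGroup_two_det M
  have diag_same_sign : 0 < M 0 1 * M 1 0 * (M 0 0 * M 1 1) := by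
    linear_combination mul_pos_of_neg_of_neg hM0 hM1
  have row_zero : M 0 0 * M 0 1 * (M 0 1 * M 1 0) < 0 := by
    linear_combination
      mul_neg_of_pos_of_neg (pow_two_pos_of_ne_zero (left_ne_zero_of_mul hM1.ne)) hM0
  have row_one : M 1 0 * M 1 1 * (M 0 1 * M 1 0) < 0 := by
    linear_combination
      mul_neg_of_pos_of_neg (pow_two_pos_of_ne_zero (right_ne_zero_of_mul hM0.ne)) hM1
  have expand : (X 0 0 * M 0 1 + X 0 1 * M 1 1) * (X 1 0 * M 0 0 + X 1 1 * M 1 0) =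
      X 0 0 * X 1 0 * (M 0 0 * M 0 1) + X 0 0 * X 1 1 * (M 0 1 * M 1 0) +
        X 0 1 * X 1 0 * (M 0 0 * M 1 1) + X 0 1 * X 1 1 * (M 1 0 * M 1 1) := by ring
  rw [expand]
  rcases pos_and_pos_or_neg_and_neg_of_mul_pos diag_same_sign with ⟨h01, _⟩ | ⟨h01, _⟩
  · have h0 := neg_of_mul_neg_left row_zero h01.le
    have h1 := neg_of_mul_neg_left row_one h01.le
    refine le_abs.2 (Or.inr ?_)
    nlinarith [hX.col_zero, hX.col_one, hX.diag_le, hX.offDiag_le]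
  · have h0 := pos_of_mul_neg_left row_zero h01.le
    have h1 := pos_of_mul_neg_left row_one h01.le
    refine le_abs.2 (Or.inl ?_)
    nlinarith [hX.col_zero, hX.col_one, hX.diag_le, hX.offDiag_le]

theorem FourthIntoFirstQuadrant.mul {X M : SL(2, K)} (hX : FourthIntoFirstQuadrant δ X)
    (hδ : 0 ≤ δ) (hM : AxesIntoFirstQuadrant δ (contragredient (Fin 2) K M)) :
    AxesIntoFirstQuadrant δ (X * M) := by
  have hM0 : M 0 0 * M 1 0 < 0 := by
    simpa [coe_contragredient_two, mul_comm] using hM.col_one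
  have hM1 : M 0 1 * M 1 1 < 0 := by
    simpa [coe_contragredient_two, mul_comm] using hM.col_zero
  have mul_apply : ∀ i j, (X * M) i j = X i 0 * M 0 j + X i 1 * M 1 j := fun i j => by
    simp [Matrix.mul_apply]
  refine ⟨?_, ?_, ?_⟩ <;> rw [mul_apply, mul_apply]
  · exact hX.mulVec_mul_pos hδ hM0
  · exact hX.mulVec_mul_pos hδ hM1
  · exact hX.le_abs_mul hδ hM0 hM1

end Quadrants

section OneHoledTorus

/-- The generators of a one-holed torus group in `SL(2, ℚ)`, chosen so that their commutator is the
hyperbolic diagonal matrix `diag(-4, -1/4)`. -/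
def torusGenerator : Fin 2 → SL(2, ℚ) :=
  ![⟨!![-4, 2; -5 / 2, 1], by norm_num⟩, ⟨!![1, -1; 5, -4], by norm_num⟩]

theorem coe_torusGenerator_zero :
    (torusGenerator 0 : Matrix (Fin 2) (Fin 2) ℚ) = !![-4, 2; -5 / 2, 1] := rfl

theorem coe_torusGenerator_one :
    (torusGenerator 1 : Matrix (Fin 2) (Fin 2) ℚ) = !![1, -1; 5, -4] := rfl

theorem coe_torusGenerator_zero_inv :
    (((torusGenerator 0)⁻¹ : SL(2, ℚ)) : Matrix (Fin 2) (Fin 2) ℚ) = !![1, -2; 5 / 2, -4] := by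
  rw [Matrix.SpecialLinearGroup.coe_inv, coe_torusGenerator_zero, Matrix.adjugate_fin_two_of]
  norm_num

theorem coe_torusGenerator_one_inv :
    (((torusGenerator 1)⁻¹ : SL(2, ℚ)) : Matrix (Fin 2) (Fin 2) ℚ) = !![-4, 1; -5, 1] := by
  rw [Matrix.SpecialLinearGroup.coe_inv, coe_torusGenerator_one, Matrix.adjugate_fin_two_of]
  norm_num

/-- The eigenvalue `-4` of the boundary commutator of `torusGenerator`. -/
def boundaryEigenvalue : ℚˣ := Units.mk0 (-4) (by norm_num)

theorem coe_boundaryEigenvalue : (boundaryEigenvalue : ℚ) = -4 := rfl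

theorem commutator_torusGenerator :
    ⁅torusGenerator 0, torusGenerator 1⁆ = diagonalTorus ℚ boundaryEigenvalue := by
  apply Subtype.ext
  simp only [commutatorElement_def, Matrix.SpecialLinearGroup.coe_mul, coe_torusGenerator_zero,
    coe_torusGenerator_one, coe_torusGenerator_zero_inv, coe_torusGenerator_one_inv,
    coe_diagonalTorus, Units.val_inv_eq_inv_val, coe_boundaryEigenvalue, Matrix.mul_fin_two]
  norm_num

/-- Disjoint sectors of the first quadrant, indexed by the letters `a`, `b⁻¹`, `a⁻¹`, `b` in order
of increasing slope, on which `torusGenerator` plays ping-pong. -/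
def sector : Fin 2 × Bool → Set (Fin 2 → ℚ)
  | (0, true) => {v | 0 < v 1 ∧ v 1 < v 0}
  | (1, false) => {v | 5 * v 0 < 4 * v 1 ∧ 2 * v 1 < 3 * v 0}
  | (0, false) => {v | 5 * v 0 < 3 * v 1 ∧ v 1 < 2 * v 0}
  | (1, true) => {v | 0 < v 0 ∧ 5 * v 0 < 2 * v 1}

theorem sector_subset_firstQuadrant : ∀ x, sector x ⊆ firstQuadrant ℚ
  | (0, true), _, ⟨h, h'⟩ => ⟨by linarith, by linarith⟩
  | (1, false), _, ⟨h, h'⟩ => ⟨by linarith, by linarith⟩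
  | (0, false), _, ⟨h, h'⟩ => ⟨by linarith, by linarith⟩
  | (1, true), _, ⟨h, h'⟩ => ⟨by linarith, by linarith⟩

theorem mapsToUpToSign_letter_sector : ∀ x y : Fin 2 × Bool, (y.1 = x.1 → y.2 = x.2) →
    MapsToUpToSign (letter torusGenerator y : SL(2, ℚ)).1 (sector x) (sector y) := by
  simp only [Prod.forall, Fin.forall_fin_two, Bool.forall_bool, letter, cond_true, cond_false,
    coe_torusGenerator_zero, coe_torusGenerator_one, coe_torusGenerator_zero_inv,
    coe_torusGenerator_one_inv, mapsToUpToSign_fin_two, sector, Set.mem_ofPred_eq,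
    Matrix.cons_val_zero, Matrix.cons_val_one]
  and_intros
  all_goals intro h
  all_goals first
    | exact absurd (h trivial) (by decide)
    | exact Or.inl fun v ⟨_, _⟩ => ⟨by linarith, by linarith⟩
    | exact Or.inr fun v ⟨_, _⟩ => ⟨by linarith, by linarith⟩

section Corner

variable {G H : Type*} [Group G] [Group H]

/-- The words `1`, `a⁻¹`, `b⁻¹` and `a⁻¹ * b⁻¹`, where `a = f 0` and `b = f 1`. The cosets of
`⁅a, b⁆` they represent are the corners of the fundamental domain adjacent to the boundary of the
one-holed torus. -/
def corner (f : Fin 2 → G) (p : Fin 2 → Bool) : G := cond (p 0) (f 0)⁻¹ 1 * cond (p 1) (f 1)⁻¹ 1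

theorem map_corner (φ : G →* H) (f : Fin 2 → G) (p : Fin 2 → Bool) :
    φ (corner f p) = corner (φ ∘ f) p := by
  cases h0 : p 0 <;> cases h1 : p 1 <;> simp [corner, h0, h1]

theorem exists_letter_mul_corner (f : Fin 2 → G) {p : Fin 2 → Bool} {x : Fin 2 × Bool}
    (hx : p x.1 = x.2) :
    ∃ k : ℤ, letter f x * corner f p = corner f (Function.update p x.1 !x.2) * ⁅f 0, f 1⁆ ^ k := by
  obtain ⟨i, e⟩ := x
  obtain rfl : p i = e := hx
  revert i
  refine Fin.forall_fin_two.2 ⟨⟨0, ?_⟩, ?_⟩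
  · cases h0 : p 0 <;> simp [letter, corner, h0]
  · cases h0 : p 0 <;> cases h1 : p 1
    · exact ⟨0, by simp [letter, corner, h0, h1]⟩
    · exact ⟨0, by simp [letter, corner, h0, h1]⟩
    · exact ⟨-1, by simp [letter, corner, h0, h1, commutatorElement_def, mul_assoc]⟩
    · exact ⟨1, by simp [letter, corner, h0, h1, commutatorElement_def, mul_assoc]⟩

theorem coe_corner_torusGenerator (p : Fin 2 → Bool) :
    (corner torusGenerator p : SL(2, ℚ)).1 =
      cond (p 0) (cond (p 1) !![6, -1; 10, -3 / 2] !![1, -2; 5 / 2, -4])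
        (cond (p 1) !![-4, 1; -5, 1] !![1, 0; 0, 1]) := by
  cases h0 : p 0 <;> cases h1 : p 1 <;>
    simp only [corner, h0, h1, cond_true, cond_false, Matrix.SpecialLinearGroup.coe_one,
      Matrix.SpecialLinearGroup.coe_mul, coe_torusGenerator_zero_inv, coe_torusGenerator_one_inv,
      Matrix.one_fin_two, Matrix.mul_fin_two] <;>
    norm_num

theorem mapsToUpToSign_corner_torusGenerator {p : Fin 2 → Bool} (hp : p 0 = true ∨ p 1 = true) :
    MapsToUpToSign (corner torusGenerator p : SL(2, ℚ)).1
      (fourthQuadrant ℚ) (firstQuadrant ℚ) := by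
  rw [coe_corner_torusGenerator]
  cases h0 : p 0 <;> cases h1 : p 1 <;>
    simp only [cond_true, cond_false, mapsToUpToSign_fin_two, firstQuadrant,
      fourthQuadrant, Set.mem_ofPred_eq, Matrix.cons_val_zero, Matrix.cons_val_one]
  · simp [h0, h1] at hp
  all_goals first
    | exact Or.inl fun v ⟨_, _, _⟩ => ⟨by linarith, by linarith⟩
    | exact Or.inr fun v ⟨_, _, _⟩ => ⟨by linarith, by linarith⟩

theorem mapsToUpToSign_letter_mul_corner {p : Fin 2 → Bool} {x : Fin 2 × Bool} (hx : p x.1 ≠ x.2) :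
    MapsToUpToSign (letter torusGenerator x * corner torusGenerator p : SL(2, ℚ)).1
      (fourthQuadrant ℚ) (sector x) := by
  rw [Matrix.SpecialLinearGroup.coe_mul, coe_corner_torusGenerator]
  obtain ⟨i, e⟩ := x
  obtain rfl : e = !p i := Bool.eq_not.2 (Ne.symm hx)
  clear hx
  revert i
  rw [Fin.forall_fin_two]
  cases h0 : p 0 <;> cases h1 : p 1 <;>
    simp only [letter, cond_true, cond_false, Bool.not_true, Bool.not_false,
      coe_torusGenerator_zero, coe_torusGenerator_one, coe_torusGenerator_zero_inv,
      coe_torusGenerator_one_inv, Matrix.mul_fin_two, mapsToUpToSign_fin_two, sector,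
      fourthQuadrant, Set.mem_ofPred_eq, Matrix.cons_val_zero, Matrix.cons_val_one]
  all_goals
    constructor <;> first
    | exact Or.inl fun v ⟨_, _, _⟩ => ⟨by linarith, by linarith⟩
    | exact Or.inr fun v ⟨_, _, _⟩ => ⟨by linarith, by linarith⟩

theorem map_commutator_zpow {φ : G →* SL(2, ℚ)} {f : Fin 2 → G} (hf : φ ∘ f = torusGenerator)
    (k : ℤ) :
    φ (⁅f 0, f 1⁆ ^ k) = diagonalTorus ℚ (boundaryEigenvalue ^ k) := by
  rw [map_zpow, map_zpow, map_commutatorElement, ← commutator_torusGenerator, ← hf]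
  rfl

theorem mem_closure_torusGenerator {φ : G →* SL(2, ℚ)} {f : Fin 2 → G}
    (hf : φ ∘ f = torusGenerator) {w : G} (hw : w ∈ Subgroup.closure (Set.range f)) :
    (∃ p, ∃ k : ℤ, w = corner f p * ⁅f 0, f 1⁆ ^ k) ∨
      ∃ x, MapsToUpToSign (φ w).1 (fourthQuadrant ℚ) (sector x) := by
  refine mem_or_exists_mem_of_mem_closure_range (f := f)
    (B := {w | ∃ p, ∃ k : ℤ, w = corner f p * ⁅f 0, f 1⁆ ^ k})
    (P := fun x => {w | MapsToUpToSign (φ w).1 (fourthQuadrant ℚ) (sector x)})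
    ⟨fun _ => false, 0, by simp [corner]⟩ ?_ ?_ hw
  · rintro x _ ⟨p, k, rfl⟩
    rw [← mul_assoc]
    by_cases hx : p x.1 = x.2
    · obtain ⟨l, hl⟩ := exists_letter_mul_corner f hx
      exact Or.inl ⟨_, l + k, by rw [hl, mul_assoc, zpow_add]⟩
    · refine Or.inr ?_
      rw [Set.mem_ofPred_eq, map_mul, map_mul, map_letter, map_corner, hf, map_commutator_zpow hf]
      exact (mapsToUpToSign_letter_mul_corner hx).mul (mapsToUpToSign_diagonalTorus _)
  · intro x y hxy w hw
    rw [Set.mem_ofPred_eq, map_mul, map_letter, hf]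
    exact (mapsToUpToSign_letter_sector x y hxy).mul hw

theorem mapsToUpToSign_of_notMem_zpowers {φ : G →* SL(2, ℚ)} {f : Fin 2 → G}
    (hf : φ ∘ f = torusGenerator) {w : G} (hw : w ∈ Subgroup.closure (Set.range f))
    (hwc : w ∉ Subgroup.zpowers ⁅f 0, f 1⁆) :
    MapsToUpToSign (φ w).1 (fourthQuadrant ℚ) (firstQuadrant ℚ) := by
  obtain ⟨p, k, rfl⟩ | ⟨x, hx⟩ := mem_closure_torusGenerator hf hw
  · have hp : p 0 = true ∨ p 1 = true := by
      by_contra! hp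
      simp only [Bool.not_eq_true] at hp
      exact hwc ⟨k, by simp [corner, hp]⟩
    rw [map_mul, map_corner, hf, map_commutator_zpow hf]
    exact (mapsToUpToSign_corner_torusGenerator hp).mul (mapsToUpToSign_diagonalTorus _)
  · exact hx.mono_right (sector_subset_firstQuadrant x)

theorem commutator_mem_closure_range (f : Fin 2 → G) :
    ⁅f 0, f 1⁆ ∈ Subgroup.closure (Set.range f) :=
  Subgroup.commutator_le_self _ <| Subgroup.commutator_mem_commutator
    (Subgroup.subset_closure ⟨0, rfl⟩) (Subgroup.subset_closure ⟨1, rfl⟩)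

theorem fourthIntoFirstQuadrant_of_notMem_zpowers {φ : G →* SL(2, ℚ)} {f : Fin 2 → G}
    (hf : φ ∘ f = torusGenerator) {w : G} (hw : w ∈ Subgroup.closure (Set.range f))
    (hwc : w ∉ Subgroup.zpowers ⁅f 0, f 1⁆) :
    FourthIntoFirstQuadrant (1 / 15) (φ w) := by
  have hφw := mapsToUpToSign_of_notMem_zpowers hf hw hwc
  have map_conj : φ (w⁻¹ * ⁅f 0, f 1⁆ * w) =
      (φ w)⁻¹ * diagonalTorus ℚ boundaryEigenvalue * φ w := by
    rw [map_mul, map_mul, map_inv, ← zpow_one ⁅f 0, f 1⁆, map_commutator_zpow hf, zpow_one]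
  have conj_notMem : w⁻¹ * ⁅f 0, f 1⁆ * w ∉ Subgroup.zpowers ⁅f 0, f 1⁆ := by
    rintro ⟨k, hk : ⁅f 0, f 1⁆ ^ k = _⟩
    apply_fun φ at hk
    rw [map_commutator_zpow hf, map_conj] at hk
    exact conj_diagonalTorus_ne (by norm_num [coe_boundaryEigenvalue])
      (signs_of_mapsToUpToSign hφw).1.ne' hk.symm
  have conj_mem := mul_mem (mul_mem (inv_mem hw) (commutator_mem_closure_range f)) hw
  have hconj := mapsToUpToSign_of_notMem_zpowers hf conj_mem conj_notMem
  rw [map_conj] at hconj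
  have bound := fourthIntoFirstQuadrant_of_mapsToUpToSign
    (by norm_num [coe_boundaryEigenvalue]) hφw hconj
  norm_num [coe_boundaryEigenvalue] at bound ⊢
  exact bound

end Corner

end OneHoledTorus

namespace SurfaceGroup

variable {G : Type*} [Group G] {g : ℕ}

/-- The generator `aᵢ` of the surface group. -/
def a (i : Fin g) : SurfaceGroup g := PresentedGroup.of (Sum.inl i)

/-- The generator `bᵢ` of the surface group. -/
def b (i : Fin g) : SurfaceGroup g := PresentedGroup.of (Sum.inr i)

theorem lift_surfaceRelator (f : Fin g ⊕ Fin g → G) :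
    FreeGroup.lift f (surfaceRelator g) =
      (List.ofFn fun i => ⁅f (Sum.inl i), f (Sum.inr i)⁆).prod := by
  rw [surfaceRelator, map_list_prod, List.map_ofFn]
  congr 2
  funext i
  simp [commutatorElement_def]

theorem prod_commutator : (List.ofFn fun i : Fin g => ⁅a i, b i⁆).prod = 1 := by
  have mk_eq_lift : PresentedGroup.mk {surfaceRelator g} = FreeGroup.lift PresentedGroup.of := by
    ext i
    rw [FreeGroup.lift_apply_of]
    rfl
  rw [← PresentedGroup.one_of_mem (Set.mem_singleton (surfaceRelator g)), mk_eq_lift,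
    lift_surfaceRelator]
  rfl

/-- The homomorphism determined by images `u i`, `v i` of `a i`, `b i` that satisfy the surface
relation. -/
def lift (u v : Fin g → G) (h : (List.ofFn fun i => ⁅u i, v i⁆).prod = 1) : SurfaceGroup g →* G :=
  PresentedGroup.toGroup (f := Sum.elim u v) <| by
    rintro _ rfl
    rw [lift_surfaceRelator]
    exact h

section Lift

variable {u v : Fin g → G} (h : (List.ofFn fun i => ⁅u i, v i⁆).prod = 1) (i : Fin g)

theorem lift_a : lift u v h (a i) = u i := PresentedGroup.toGroup.of _

theorem lift_b : lift u v h (b i) = v i := PresentedGroup.toGroup.of _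

end Lift

theorem closure_range_a_union_range_b :
    Subgroup.closure (Set.range (a : Fin g → SurfaceGroup g) ∪ Set.range b) = ⊤ := by
  rw [← PresentedGroup.closure_range_of {surfaceRelator g}, ← Set.Sum.elim_range]
  congr 2
  funext i
  cases i <;> rfl

end SurfaceGroup

section Cover

variable {S : Type*} [Group S] {m : ℕ}

/-- Left translation of the fibres of `J × S → J`, by a different group element on each fibre. -/
def fibreTranslation (J S : Type*) [Group S] : (J → S) →* Equiv.Perm (J × S) where
  toFun f := Equiv.prodShear (Equiv.refl J) fun i => Equiv.mulLeft (f i)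
  map_one' := by ext <;> simp
  map_mul' f f' := by ext <;> simp

theorem fibreTranslation_apply {J : Type*} (f : J → S) (i : J) (s : S) :
    fibreTranslation J S f (i, s) = (i, f i * s) :=
  rfl

/-- The permutation of `Fin (m + 1) × S` that moves each fibre to the preceding one, cyclically, and
multiplies by `s` on passing from the first fibre to the last. -/
def fibreShift (m : ℕ) (s : S) : Equiv.Perm (Fin (m + 1) × S) where
  toFun z := Fin.cases (motive := fun _ => Fin (m + 1) × S) (Fin.last m, s * z.2)
    (fun j => (j.castSucc, z.2)) z.1
  invFun z := Fin.lastCases (motive := fun _ => Fin (m + 1) × S) (0, s⁻¹ * z.2)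
    (fun j => (j.succ, z.2)) z.1
  left_inv := by
    rintro ⟨i, t⟩
    cases i using Fin.cases <;> simp
  right_inv := by
    rintro ⟨i, t⟩
    cases i using Fin.lastCases <;> simp

theorem fibreShift_zero (s t : S) : fibreShift m s (0, t) = (Fin.last m, s * t) := rfl

theorem fibreShift_succ (s t : S) (j : Fin m) :
    fibreShift m s (j.succ, t) = (j.castSucc, t) := rfl

theorem fibreShift_pow_apply (s t : S) (i : Fin (m + 1)) :
    (fibreShift m s ^ (i : ℕ)) (i, t) = (0, t) := by
  induction i using Fin.induction with
  | zero => rfl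
  | succ j ih => rw [Fin.val_succ, pow_succ, Equiv.Perm.mul_apply, fibreShift_succ, ← ih]; rfl

theorem fibreShift_pow_succ_apply_zero (s t : S) :
    (fibreShift m s ^ (m + 1)) (0, t) = (0, s * t) := by
  rw [pow_succ, Equiv.Perm.mul_apply, fibreShift_zero]
  exact fibreShift_pow_apply s (s * t) (Fin.last m)

theorem conj_fibreShift_pow_fibreTranslation_apply (s t : S) (f : Fin (m + 1) → S)
    (i : Fin (m + 1)) :
    MulAut.conj (fibreShift m s ^ (i : ℕ)) (fibreTranslation _ S f) (0, t) = (0, f i * t) := by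
  have inv_apply : (fibreShift m s ^ (i : ℕ))⁻¹ (0, t) = (i, t) := by
    rw [Equiv.Perm.inv_eq_iff_eq, fibreShift_pow_apply]
  rw [MulAut.conj_apply, Equiv.Perm.mul_apply, Equiv.Perm.mul_apply, inv_apply,
    fibreTranslation_apply, fibreShift_pow_apply]

theorem fibreShift_mul_fibreTranslation (s : S) (f : Fin (m + 1) → S) :
    fibreShift m s * fibreTranslation _ S f =
      fibreTranslation _ S (Fin.snoc (Fin.tail f) (s * f 0 * s⁻¹)) * fibreShift m s := by
  ext1 ⟨i, t⟩
  cases i using Fin.cases <;>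
    simp [fibreTranslation_apply, fibreShift_zero, fibreShift_succ, Fin.tail, mul_assoc]

theorem commutator_fibreShift_fibreTranslation (s t : S) (c : Fin (m + 1) → S)
    (h : ⁅s, t⁆ * (List.ofFn c).prod = 1) :
    ⁅fibreShift m s, fibreTranslation _ S fun i => (Fin.partialProd c i.castSucc)⁻¹ * t⁆ =
      fibreTranslation _ S c⁻¹ := by
  rw [commutatorElement_def, fibreShift_mul_fibreTranslation, mul_inv_cancel_right, ← map_inv,
    ← map_mul]
  congr 1
  have partialProd_last : ⁅s, t⁆ * Fin.partialProd c (Fin.last (m + 1)) = 1 := by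
    rwa [Fin.partialProd, List.take_of_length_le (by simp)]
  funext i
  cases i using Fin.lastCases with
  | last =>
    rw [← Fin.succ_last, Fin.partialProd_succ, commutatorElement_def] at partialProd_last
    simpa [eq_inv_iff_mul_eq_one, mul_assoc] using partialProd_last
  | cast j =>
    have castSucc_succ : j.succ.castSucc = j.castSucc.succ := (Fin.succ_castSucc j).symm
    simp [Fin.tail, castSucc_succ, Fin.partialProd_succ, mul_assoc]

theorem commutator_pow_mul_prod_conj {a b x y : S} (h : ⁅a, b⁆ * ⁅x, y⁆ = 1) (n : ℕ) :
    ⁅a ^ n, b⁆ * (List.ofFn fun i : Fin n =>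
      ⁅MulAut.conj (a ^ (i : ℕ)) x, MulAut.conj (a ^ (i : ℕ)) y⁆).prod = 1 := by
  induction n with
  | zero => simp
  | succ n ih =>
    rw [List.ofFn_succ', List.concat_eq_append, List.prod_append, List.prod_singleton]
    simp only [Fin.val_castSucc, Fin.val_last]
    rw [eq_inv_of_mul_eq_one_right ih, ← map_commutatorElement, eq_inv_of_mul_eq_one_right h,
      MulAut.conj_apply, pow_succ]
    simp only [commutatorElement_def]
    group

theorem injective_of_apply_eq_of_closure_eq_top {X : Type*} {φ : S →* Equiv.Perm X} {ι : S → X}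
    {s : Set S} (hι : Function.Injective ι) (hs : Subgroup.closure s = ⊤)
    (h : ∀ x ∈ s, ∀ z, φ x (ι z) = ι (x * z)) : Function.Injective φ := by
  have apply_eq : ∀ x, ∀ z, φ x (ι z) = ι (x * z) := by
    intro x
    have hx : x ∈ Subgroup.closure s := hs ▸ Subgroup.mem_top x
    induction hx using Subgroup.closure_induction with
    | mem x hx => exact h x hx
    | one => simp
    | mul x y _ _ ihx ihy => intro z; simp [ihx, ihy, mul_assoc]
    | inv x _ ih => intro z; rw [map_inv, Equiv.Perm.inv_eq_iff_eq, ih, mul_inv_cancel_left]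
  intro x y hxy
  simpa [apply_eq, hι.eq_iff] using congrArg (fun σ => σ (ι 1)) hxy

end Cover

namespace SurfaceGroup

variable (m : ℕ)

/-- The covering of the closed surface of genus two by the closed surface of genus `m + 2`, on
fundamental groups: the cyclic cover of degree `m + 1` dual to `b 0`, the handle `a 1`, `b 1` of
the base having one lift to each sheet. -/
def coverMap : SurfaceGroup (m + 2) →* SurfaceGroup 2 :=
  lift (Fin.cons (a 0 ^ (m + 1)) fun i => MulAut.conj (a 0 ^ (i : ℕ)) (a 1))
    (Fin.cons (b 0) fun i => MulAut.conj (a 0 ^ (i : ℕ)) (b 1)) <| by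
      rw [List.ofFn_succ, List.prod_cons]
      exact commutator_pow_mul_prod_conj (by simpa using prod_commutator (g := 2)) (m + 1)

/-- The permutation representation of the genus-two group induced from the left regular
representation of the genus-`(m + 2)` group along `coverMap`. -/
def monodromy : SurfaceGroup 2 →* Equiv.Perm (Fin (m + 1) × SurfaceGroup (m + 2)) :=
  let c : Fin (m + 1) → SurfaceGroup (m + 2) := fun i => ⁅a i.succ, b i.succ⁆
  lift ![fibreShift m (a 0), fibreTranslation _ _ fun i => a i.succ]
    ![fibreTranslation _ _ fun i => (Fin.partialProd c i.castSucc)⁻¹ * b 0,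
      fibreTranslation _ _ fun i => b i.succ] <| by
      have relation : ⁅(a 0 : SurfaceGroup (m + 2)), b 0⁆ * (List.ofFn c).prod = 1 := by
        rw [← prod_commutator (g := m + 2), List.ofFn_succ (n := m + 1), List.prod_cons]
      simp only [List.ofFn_succ, List.ofFn_zero, List.prod_cons, List.prod_nil, mul_one]
      simp only [Matrix.cons_val_zero, Matrix.cons_val_succ, ← map_commutatorElement,
        commutator_fibreShift_fibreTranslation _ _ c relation]
      rw [map_inv]
      exact inv_mul_cancel _

theorem monodromy_conj_pow_a (i : Fin (m + 1)) (x : SurfaceGroup 2) :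
    monodromy m (MulAut.conj (a 0 ^ (i : ℕ)) x) =
      MulAut.conj (fibreShift m (a 0) ^ (i : ℕ)) (monodromy m x) := by
  have monodromy_a_zero : monodromy m (a 0) = fibreShift m (a 0) := by
    rw [monodromy, lift_a, Matrix.cons_val_zero]
  rw [MulAut.conj_apply, MulAut.conj_apply, map_mul, map_mul, map_inv, map_pow, monodromy_a_zero]

theorem coverMap_injective : Function.Injective (coverMap m) := by
  apply Function.Injective.of_comp (f := monodromy m)
  rw [← MonoidHom.coe_comp]
  refine injective_of_apply_eq_of_closure_eq_top (Prod.mk_right_injective 0)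
    closure_range_a_union_range_b ?_
  rintro _ (⟨i, rfl⟩ | ⟨i, rfl⟩) z <;> cases i using Fin.cases with
  | zero => simp [coverMap, monodromy, lift_a, lift_b, fibreShift_pow_succ_apply_zero,
      fibreTranslation_apply]
  | succ i =>
    simp only [coverMap, lift_a, lift_b, MonoidHom.comp_apply, Fin.cons_succ, monodromy_conj_pow_a]
    simp only [monodromy, lift_a, lift_b]
    exact conj_fibreShift_pow_fibreTranslation_apply ..

end SurfaceGroup

section GenusTwo

/-- The genus-two surface is the double of a one-holed torus along its boundary: the second half is
represented by the contragredient of the first, which inverts the diagonal boundary commutator. -/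
def genusTwoRep : SurfaceGroup 2 →* SL(2, ℚ) :=
  SurfaceGroup.lift ![torusGenerator 0, contragredient (Fin 2) ℚ (torusGenerator 0)]
    ![torusGenerator 1, contragredient (Fin 2) ℚ (torusGenerator 1)] <| by
      have double : ⁅torusGenerator 0, torusGenerator 1⁆ *
          contragredient (Fin 2) ℚ ⁅torusGenerator 0, torusGenerator 1⁆ = 1 := by
        rw [commutator_torusGenerator, contragredient_diagonalTorus, mul_inv_cancel]
      simpa [map_commutatorElement] using double

/-- The generators of the fundamental group of the `i`-th half of the genus-two surface. -/
def halfGenerator (i : Fin 2) : Fin 2 → SurfaceGroup 2 := ![SurfaceGroup.a i, SurfaceGroup.b i]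

/-- `genusTwoRep`, twisted so as to restrict to the standard representation `torusGenerator` of the
`i`-th half of the surface. -/
def halfRep : Fin 2 → SurfaceGroup 2 →* SL(2, ℚ) :=
  ![genusTwoRep, (contragredient (Fin 2) ℚ).comp genusTwoRep]

theorem halfRep_comp_halfGenerator (i : Fin 2) : halfRep i ∘ halfGenerator i = torusGenerator := by
  funext j
  fin_cases i <;> fin_cases j <;>
    simp [halfRep, halfGenerator, genusTwoRep, SurfaceGroup.lift_a, SurfaceGroup.lift_b,
      contragredient_contragredient]

theorem halfRep_of_ne {i j : Fin 2} (h : i ≠ j) (x : SurfaceGroup 2) :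
    halfRep j x = contragredient (Fin 2) ℚ (halfRep i x) := by
  fin_cases i <;> fin_cases j <;> simp [halfRep, contragredient_contragredient] at h ⊢

theorem zpowers_commutator_halfGenerator (i : Fin 2) :
    Subgroup.zpowers ⁅halfGenerator i 0, halfGenerator i 1⁆ =
      Subgroup.zpowers ⁅halfGenerator 0 0, halfGenerator 0 1⁆ := by
  have relation : ⁅halfGenerator 0 0, halfGenerator 0 1⁆ *
      ⁅halfGenerator 1 0, halfGenerator 1 1⁆ = 1 := by
    simpa [halfGenerator] using SurfaceGroup.prod_commutator (g := 2)
  revert i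
  rw [Fin.forall_fin_two]
  exact ⟨rfl, by rw [eq_inv_of_mul_eq_one_right relation, Subgroup.zpowers_inv]⟩

theorem iSup_closure_range_halfGenerator :
    ⨆ i, Subgroup.closure (Set.range (halfGenerator i)) = ⊤ := by
  rw [eq_top_iff, ← SurfaceGroup.closure_range_a_union_range_b, Subgroup.closure_le]
  rintro _ (⟨i, rfl⟩ | ⟨i, rfl⟩) <;> refine Subgroup.mem_iSup_of_mem i (Subgroup.subset_closure ?_)
  · exact ⟨0, rfl⟩
  · exact ⟨1, rfl⟩

theorem mem_zpowers_or_axesIntoFirstQuadrant_halfRep (x : SurfaceGroup 2) :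
    x ∈ Subgroup.zpowers ⁅halfGenerator 0 0, halfGenerator 0 1⁆ ∨
      ∃ i, AxesIntoFirstQuadrant (1 / 15) (halfRep i x) := by
  have fourth : ∀ i, ∀ w ∈ Subgroup.closure (Set.range (halfGenerator i)),
      w ∉ Subgroup.zpowers ⁅halfGenerator 0 0, halfGenerator 0 1⁆ →
        FourthIntoFirstQuadrant (1 / 15) (halfRep i w) := fun i w hw hwc =>
    fourthIntoFirstQuadrant_of_notMem_zpowers (halfRep_comp_halfGenerator i) hw
      (zpowers_commutator_halfGenerator i ▸ hwc)
  refine mem_or_exists_mem_of_mem_iSup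
    (P := fun i => {x | AxesIntoFirstQuadrant (1 / 15) (halfRep i x)}) (fun i => ?_)
    (fun i w hw hwc => (fourth i w hw hwc).axesIntoFirstQuadrant) (fun i j hij w hw hwc y hy => ?_)
    (iSup_closure_range_halfGenerator ▸ Subgroup.mem_top x)
  · rw [← zpowers_commutator_halfGenerator i, Subgroup.zpowers_le]
    exact commutator_mem_closure_range _
  · rw [Set.mem_ofPred_eq, halfRep_of_ne hij] at hy
    rw [Set.mem_ofPred_eq, map_mul]
    exact (fourth i w hw hwc).mul (by norm_num) hy

theorem offDiag_halfRep (i : Fin 2) (x : SurfaceGroup 2) :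
    halfRep i x 0 1 * halfRep i x 1 0 = genusTwoRep x 0 1 * genusTwoRep x 1 0 := by
  revert i
  rw [Fin.forall_fin_two]
  refine ⟨rfl, ?_⟩
  simp [halfRep, coe_contragredient_two, mul_comm]

theorem half_le_abs_zpow_sub_one {K : Type*} [Field K] [LinearOrder K] [IsStrictOrderedRing K]
    {u : K} (hu : 2 ≤ |u|) {k : ℤ} (hk : k ≠ 0) : 1 / 2 ≤ |u ^ k - 1| := by
  have one_le : 1 ≤ |u| := one_le_two.trans hu
  rcases hk.lt_or_gt with hk | hk
  · have zpow_le : |u| ^ k ≤ 1 / 2 := calc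
      |u| ^ k ≤ |u| ^ (-1 : ℤ) := zpow_le_zpow_right₀ one_le (by lia)
      _ ≤ 1 / 2 := by rw [zpow_neg_one, one_div]; exact inv_anti₀ two_pos hu
    have := abs_sub_abs_le_abs_sub 1 (u ^ k)
    rw [abs_one, abs_zpow, abs_sub_comm] at this
    linarith
  · have le_zpow : 2 ≤ |u| ^ k := hu.trans <| by
      simpa using zpow_le_zpow_right₀ one_le (show 1 ≤ k from hk)
    have := abs_sub_abs_le_abs_sub (u ^ k) 1
    rw [abs_one, abs_zpow] at this
    linarith

theorem genusTwoRep_bounded_away_from_one {x : SurfaceGroup 2} (hx : x ≠ 1) :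
    1 / 15 ≤ |genusTwoRep x 0 1 * genusTwoRep x 1 0| ∨ 1 / 2 ≤ |genusTwoRep x 0 0 - 1| := by
  obtain ⟨k, rfl⟩ | ⟨i, hi⟩ := mem_zpowers_or_axesIntoFirstQuadrant_halfRep x
  · have hk : k ≠ 0 := fun hk => hx (by simp [hk])
    have map_boundary :
        genusTwoRep (⁅halfGenerator 0 0, halfGenerator 0 1⁆ ^ k) =
          diagonalTorus ℚ (boundaryEigenvalue ^ k) :=
      map_commutator_zpow (halfRep_comp_halfGenerator 0) k
    have entry : diagonalTorus ℚ (boundaryEigenvalue ^ k) 0 0 = (-4) ^ k := by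
      rw [coe_diagonalTorus, ← coe_boundaryEigenvalue]
      simp
    refine Or.inr ?_
    dsimp only
    rw [map_boundary, entry]
    exact half_le_abs_zpow_sub_one (by norm_num) hk
  · exact Or.inl (offDiag_halfRep i x ▸ hi.le_offDiag)

end GenusTwo

section Symplectic

variable {l R S : Type*} [Fintype l] [DecidableEq l] [CommRing R] [CommRing S]

/-- The representation of `SL(2, R)` on `l` copies of the plane, with its symplectic form; an entry
of the matrix becomes a scalar block. -/
def scalarBlocks (l R : Type*) [Fintype l] [DecidableEq l] [CommRing R] :
    SL(2, R) →* Matrix.symplecticGroup l R where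
  toFun M := ⟨Matrix.fromBlocks (M 0 0 • 1) (M 0 1 • 1) (M 1 0 • 1) (M 1 1 • 1), by
    rw [SymplecticGroup.fromBlocks_mem_iff]
    have det_smul_one :
        (M 0 0 * M 1 1 - M 0 1 * M 1 0) • (1 : Matrix l l R) = 1 := by
      rw [← Matrix.det_fin_two, M.det_coe, one_smul]
    simpa [smul_smul, mul_comm, sub_smul] using det_smul_one⟩
  map_one' := Subtype.ext (by simp)
  map_mul' M N := Subtype.ext (by
    simp [Matrix.fromBlocks_multiply, Matrix.mul_apply, Fin.sum_univ_two, ← add_smul, mul_comm,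
      smul_smul])

theorem coe_scalarBlocks (M : SL(2, R)) :
    (scalarBlocks l R M : Matrix (l ⊕ l) (l ⊕ l) R) =
      Matrix.fromBlocks (M 0 0 • 1) (M 0 1 • 1) (M 1 0 • 1) (M 1 1 • 1) :=
  rfl

theorem scalarBlocks_map (f : R →+* S) (M : SL(2, R)) :
    (scalarBlocks l S (Matrix.SpecialLinearGroup.map f M) : Matrix (l ⊕ l) (l ⊕ l) S) =
      (scalarBlocks l R M : Matrix (l ⊕ l) (l ⊕ l) R).map f := by
  have map_smul_one : ∀ r : R, (r • (1 : Matrix l l R)).map f = f r • 1 := fun r => by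
    ext i j
    simp [Matrix.one_apply, apply_ite f]
  simp only [coe_scalarBlocks, Matrix.fromBlocks_map, map_smul_one]
  rfl

theorem isInducing_scalarBlocks [Nonempty l] [TopologicalSpace R] [IsTopologicalRing R] :
    Topology.IsInducing (scalarBlocks l R) := by
  obtain ⟨z⟩ := ‹Nonempty l›
  let plane (N : Matrix.symplecticGroup l R) : Matrix (Fin 2) (Fin 2) R :=
    N.1.submatrix ![Sum.inl z, Sum.inr z] ![Sum.inl z, Sum.inr z]
  have plane_scalarBlocks : plane ∘ scalarBlocks l R = Subtype.val := by
    funext M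
    ext i j
    fin_cases i <;> fin_cases j <;> simp [plane, coe_scalarBlocks, -Matrix.submatrix_cons_row]
  refine .of_comp ?_ (continuous_subtype_val.matrix_submatrix _ _)
    (plane_scalarBlocks ▸ Topology.IsInducing.subtypeVal)
  refine Continuous.subtype_mk (Continuous.matrix_fromBlocks ?_ ?_ ?_ ?_) _ <;>
    exact (continuous_subtype_val.matrix_elem _ _).smul continuous_const

end Symplectic

section Discrete

open Filter Topology

theorem injective_of_comap_nhds_one_le {Γ G : Type*} [Group Γ] [Group G] [TopologicalSpace G]
    {ρ : Γ →* G} (h : comap ρ (𝓝 1) ≤ pure 1) : Function.Injective ρ := by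
  obtain ⟨U, hU, hUρ⟩ := mem_comap.1 (h (mem_pure.2 (Set.mem_singleton 1)))
  rw [injective_iff_map_eq_one]
  intro x hx
  exact hUρ (show ρ x ∈ U from hx ▸ mem_of_mem_nhds hU)

theorem discreteTopology_range_of_comap_nhds_one_le {Γ G : Type*} [Group Γ] [Group G]
    [TopologicalSpace G] [ContinuousMul G] {ρ : Γ →* G} (h : comap ρ (𝓝 1) ≤ pure 1) :
    DiscreteTopology ρ.range := by
  obtain ⟨U, hU, hUρ⟩ := mem_comap.1 (h (mem_pure.2 (Set.mem_singleton 1)))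
  have : ContinuousMul ρ.range := ρ.range.toSubmonoid.continuousMul
  refine discreteTopology_of_isOpen_singleton_one ?_
  rw [isOpen_iff_mem_nhds]
  rintro _ rfl
  filter_upwards [continuousAt_subtype_val.preimage_mem_nhds hU]
  rintro ⟨_, x, rfl⟩ hx
  rw [Set.mem_singleton_iff, Subtype.ext_iff]
  exact (congrArg ρ (hUρ hx)).trans (map_one ρ)

end Discrete

open Filter Topology

theorem comap_genusTwoRep_nhds_one_le :
    comap ((Matrix.SpecialLinearGroup.map (Rat.castHom ℝ)).comp genusTwoRep) (𝓝 1) ≤ pure 1 := by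
  have continuous_entry : ∀ i j, Continuous fun M : SL(2, ℝ) => M i j := fun i j =>
    continuous_subtype_val.matrix_elem i j
  have eventually_offDiag : ∀ᶠ M : SL(2, ℝ) in 𝓝 1, |M 0 1 * M 1 0| < 1 / 15 :=
    ((continuous_entry 0 1).mul (continuous_entry 1 0)).abs.continuousAt.eventually_lt_const
      (by norm_num)
  have eventually_diag : ∀ᶠ M : SL(2, ℝ) in 𝓝 1, |M 0 0 - 1| < 1 / 2 :=
    ((continuous_entry 0 0).sub continuous_const).abs.continuousAt.eventually_lt_const
      (by norm_num)
  rw [le_pure_iff]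
  filter_upwards [(eventually_offDiag.and eventually_diag).comap _]
  rintro x ⟨offDiag_lt, diag_lt⟩
  by_contra hx
  simp only [MonoidHom.comp_apply, Matrix.SpecialLinearGroup.map_apply_coe,
    RingHom.mapMatrix_apply, Matrix.map_apply, eq_ratCast] at offDiag_lt diag_lt
  rcases genusTwoRep_bounded_away_from_one hx with h | h
  · exact offDiag_lt.not_ge (by simpa using (Rat.cast_le (K := ℝ)).2 h)
  · exact diag_lt.not_ge (by simpa using (Rat.cast_le (K := ℝ)).2 h)

/-- For every `k ≥ 1` and `g ≥ 2` there is a discrete and faithful representation of the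
genus-`g` surface group into `Sp(2k,ℝ)` with all matrix entries rational. -/
theorem exists_discrete_faithful_rational_rep_symplectic (k : ℕ) (hk : 1 ≤ k)
    (g : ℕ) (hg : 2 ≤ g) :
    ∃ ρ : SurfaceGroup g →* Matrix.symplecticGroup (Fin k) ℝ,
      Function.Injective ρ ∧
      (∀ x : SurfaceGroup g, ∀ i j,
        ((ρ x : Matrix.symplecticGroup (Fin k) ℝ) :
            Matrix (Fin k ⊕ Fin k) (Fin k ⊕ Fin k) ℝ) i j ∈
          Set.range ((↑) : ℚ → ℝ)) ∧
      DiscreteTopology ↥ρ.range := by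
  obtain ⟨m, rfl⟩ := Nat.exists_eq_add_of_le' hg
  have : Nonempty (Fin k) := ⟨⟨0, hk⟩⟩
  let τ : SurfaceGroup 2 →* SL(2, ℝ) :=
    (Matrix.SpecialLinearGroup.map (Rat.castHom ℝ)).comp genusTwoRep
  let ρ := (scalarBlocks (Fin k) ℝ).comp (τ.comp (SurfaceGroup.coverMap m))
  have discrete : comap ρ (𝓝 1) ≤ pure 1 := calc
    comap ρ (𝓝 1) = comap (SurfaceGroup.coverMap m)
        (comap τ (comap (scalarBlocks (Fin k) ℝ) (𝓝 (scalarBlocks (Fin k) ℝ 1)))) := by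
      rw [map_one, comap_comap, comap_comap]; rfl
    _ ≤ comap (SurfaceGroup.coverMap m) (pure (SurfaceGroup.coverMap m 1)) := by
      rw [← isInducing_scalarBlocks.nhds_eq_comap, map_one]
      exact comap_mono comap_genusTwoRep_nhds_one_le
    _ = pure 1 := by rw [← map_pure, comap_map (SurfaceGroup.coverMap_injective m)]
  exact ⟨ρ, injective_of_comap_nhds_one_le discrete,
    fun x i j => ⟨_, (congrFun₂ (scalarBlocks_map (Rat.castHom ℝ) _) i j).symm⟩,
    discreteTopology_range_of_comap_nhds_one_le discrete⟩
end
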